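/- arXiv:1011.3071 — 2 statements merged into one kernel-verified Lean document; each statement's English description precedes it below -/
import Mathlib

section
/- For every ε > 0, the Moreau–Yosida approximation θ_ε : E → ℝ is a convex function that is differentiable at every point, with Fréchet derivative at x given by the linear map v ↦ ⟨(x − J_ε(x))/ε, v⟩; in particular the gradient map x ↦ (x − J_ε(x))/ε is Lipschitz continuous (with constant 1/ε). -/
open scoped RealInnerProductSpace

/-- The function `y ↦ ‖x − y‖²/(2ε) + θ(y)` whose infimum defines the
Moreau–Yosida approximation. -/
noncomputable def moreauFn {k : ℕ} (θ : EuclideanSpace ℝ (Fin k) → EReal) (ε : ℝ)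
    (x y : EuclideanSpace ℝ (Fin k)) : EReal :=
  ((‖x - y‖ ^ 2 / (2 * ε) : ℝ) : EReal) + θ y

/-!
Write `p = J_ε(x)` and `g(x) = (x - p) / ε`. Keeping the competitor `p` when `x` moves to `y` gives
the quadratic upper bound `θ_ε(y) ≤ θ_ε(x) + ⟪g(x), y - x⟫ + ‖y - x‖² / (2ε)`. Conversely,
`(p, θ(p))` minimizes a differentiable function over the convex epigraph of `θ`, and the first-order
condition there says that `g(x)` is a subgradient of `θ` at `p`; completing a square turns this into
`θ_ε(x) + ⟪g(x), y - x⟫ ≤ θ_ε(y)`. The lower bound alone yields convexity, and the two bounds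
together yield the derivative. Adding the first-order conditions at two points shows that
`x ↦ x - J_ε(x)` is firmly nonexpansive, hence `1`-Lipschitz.
-/

open Set Filter Topology

theorem convexOn_of_forall_exists_linearMap_add_le {𝕜 E β : Type*} [Ring 𝕜] [PartialOrder 𝕜]
    [AddCommGroup E] [Module 𝕜 E] [AddCommGroup β] [PartialOrder β] [IsOrderedAddMonoid β]
    [Module 𝕜 β] [PosSMulMono 𝕜 β] {s : Set E} {f : E → β} (hs : Convex 𝕜 s)
    (h : ∀ x ∈ s, ∃ φ : E →ₗ[𝕜] β, ∀ y ∈ s, f x + φ (y - x) ≤ f y) : ConvexOn 𝕜 s f := by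
  refine ⟨hs, fun x hx y hy a b ha hb hab ↦ ?_⟩
  set m := a • x + b • y with hm
  obtain ⟨φ, hφ⟩ := h m (hs hx hy ha hb hab)
  have hbary : a • (x - m) + b • (y - m) = 0 := by
    rw [smul_sub, smul_sub, sub_add_sub_comm, ← add_smul, hab, one_smul, hm, sub_self]
  calc f m = (a + b) • f m + φ (a • (x - m) + b • (y - m)) := by
        rw [hab, one_smul, hbary, map_zero, add_zero]
    _ = a • (f m + φ (x - m)) + b • (f m + φ (y - m)) := by
        simp only [map_add, map_smul, add_smul, smul_add]
        abel
    _ ≤ a • f x + b • f y := by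
        gcongr
        exacts [hφ x hx, hφ y hy]

theorem hasFDerivAt_of_le_of_le_add_sq {E : Type*} [NormedAddCommGroup E] [NormedSpace ℝ E]
    {f : E → ℝ} {f' : E →L[ℝ] ℝ} {x : E} {C : ℝ}
    (hlower : ∀ᶠ y in 𝓝 x, f x + f' (y - x) ≤ f y)
    (hupper : ∀ᶠ y in 𝓝 x, f y ≤ f x + f' (y - x) + C * ‖y - x‖ ^ 2) : HasFDerivAt f f' x := by
  have hO : (fun y ↦ f y - f x - f' (y - x)) =O[𝓝 x] fun y ↦ ‖y - x‖ ^ 2 := by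
    refine .of_bound C ?_
    filter_upwards [hlower, hupper] with y hl hu
    rw [Real.norm_of_nonneg (by linarith), Real.norm_of_nonneg (by positivity)]
    linarith
  exact .of_isLittleO (hO.trans_isLittleO (Asymptotics.isLittleO_pow_sub_sub x one_lt_two))

theorem norm_le_norm_of_sq_norm_le_inner {E : Type*} [SeminormedAddCommGroup E]
    [InnerProductSpace ℝ E] {u v : E} (h : ‖u‖ ^ 2 ≤ ⟪u, v⟫) : ‖u‖ ≤ ‖v‖ := by
  rcases (norm_nonneg u).eq_or_lt with hu | hu
  · exact hu ▸ norm_nonneg v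
  · refine le_of_mul_le_mul_left ?_ hu
    calc ‖u‖ * ‖u‖ = ‖u‖ ^ 2 := (sq _).symm
      _ ≤ ⟪u, v⟫ := h
      _ ≤ ‖u‖ * ‖v‖ := real_inner_le_norm u v

section InnerProductSpace

variable {E : Type*} [NormedAddCommGroup E] [InnerProductSpace ℝ E]

theorem hasFDerivAt_norm_sub_sq_div_add (x : E) (ε : ℝ) (a : E × ℝ) :
    HasFDerivAt (fun q : E × ℝ ↦ ‖x - q.1‖ ^ 2 / (2 * ε) + q.2)
      (.snd ℝ E ℝ - ε⁻¹ • (innerSL ℝ (x - a.1)).comp (.fst ℝ E ℝ)) a := by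
  have hsq : HasFDerivAt (fun q : E × ℝ ↦ ‖x - q.1‖ ^ 2)
      (2 • (innerSL ℝ (x - a.1)).comp (-.fst ℝ E ℝ)) a :=
    (hasFDerivAt_fst.const_sub x).norm_sq
  simp only [div_eq_inv_mul]
  refine ((hsq.const_mul (2 * ε)⁻¹).fun_add hasFDerivAt_snd).congr_fderiv ?_
  refine ContinuousLinearMap.ext fun v ↦ ?_
  change (2 * ε)⁻¹ * (2 • ⟪x - a.1, -v.1⟫) + v.2 = v.2 - ε⁻¹ * ⟪x - a.1, v.1⟫
  rw [inner_neg_right]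
  ring

theorem inv_mul_inner_sub_le_of_isMinOn {s : Set (E × ℝ)} (hs : Convex ℝ s) {x : E} {ε : ℝ}
    {a b : E × ℝ} (hmin : IsMinOn (fun q ↦ ‖x - q.1‖ ^ 2 / (2 * ε) + q.2) s a)
    (ha : a ∈ s) (hb : b ∈ s) : ε⁻¹ * ⟪x - a.1, b.1 - a.1⟫ ≤ b.2 - a.2 := by
  have hdir : b - a ∈ posTangentConeAt s a :=
    sub_mem_posTangentConeAt_of_segment_subset (hs.segment_subset ha hb)
  have hderiv := hmin.localize.hasFDerivWithinAt_nonneg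
    (hasFDerivAt_norm_sub_sq_div_add x ε a).hasFDerivWithinAt hdir
  simpa [inner_sub_left] using hderiv

end InnerProductSpace

/-- Properness in the sense of convex analysis, for extended-real-valued functions. -/
structure IsProperFunction {α : Type*} (θ : α → EReal) : Prop where
  ne_bot : ∀ x, θ x ≠ ⊥
  exists_ne_top : ∃ x, θ x ≠ ⊤

section SeminormedAddCommGroup

variable {E : Type*} [SeminormedAddCommGroup E]

/-- The objective of `moreauFn`, over an arbitrary seminormed group. -/
noncomputable def proxObjective (θ : E → EReal) (ε : ℝ) (x y : E) : EReal :=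
  ((‖x - y‖ ^ 2 / (2 * ε) : ℝ) : EReal) + θ y

/-- The Moreau–Yosida approximation `θ_ε`. It is real-valued for use in calculus; infinite values of
the infimum are sent to `0`, which does not happen when `θ` is proper and the infimum attained. -/
noncomputable def moreauEnvelope (θ : E → EReal) (ε : ℝ) (x : E) : ℝ :=
  (⨅ y, proxObjective θ ε x y).toReal

/-- `p` is a proximal point of `x`, i.e. a possible value of `J_ε(x)`. -/
def IsProxPoint (θ : E → EReal) (ε : ℝ) (x p : E) : Prop :=
  ∀ z, proxObjective θ ε x p ≤ proxObjective θ ε x z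

namespace IsProxPoint

variable {θ : E → EReal} {ε : ℝ} {x p : E}

theorem ne_top (hp : IsProxPoint θ ε x p) (hθ : IsProperFunction θ) : θ p ≠ ⊤ := by
  obtain ⟨z, hz⟩ := hθ.exists_ne_top
  intro htop
  have hle : ⊤ ≤ proxObjective θ ε x z := by
    simpa only [proxObjective, htop, EReal.coe_add_top] using hp z
  exact EReal.add_ne_top (EReal.coe_ne_top _) hz (top_le_iff.1 hle)

theorem coe_toReal (hp : IsProxPoint θ ε x p) (hθ : IsProperFunction θ) :
    ((θ p).toReal : EReal) = θ p :=
  EReal.coe_toReal (hp.ne_top hθ) (hθ.ne_bot p)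

theorem moreauEnvelope_eq (hp : IsProxPoint θ ε x p) (hθ : IsProperFunction θ) :
    moreauEnvelope θ ε x = ‖x - p‖ ^ 2 / (2 * ε) + (θ p).toReal := by
  have hinf : ⨅ z, proxObjective θ ε x z = proxObjective θ ε x p :=
    le_antisymm (iInf_le _ _) (le_iInf hp)
  rw [moreauEnvelope, hinf, proxObjective, ← hp.coe_toReal hθ, ← EReal.coe_add]
  simp only [EReal.toReal_coe]

theorem moreauEnvelope_le (hp : IsProxPoint θ ε x p) (hθ : IsProperFunction θ) {z : E} {t : ℝ}
    (ht : θ z ≤ t) : moreauEnvelope θ ε x ≤ ‖x - z‖ ^ 2 / (2 * ε) + t := by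
  rw [hp.moreauEnvelope_eq hθ, ← EReal.coe_le_coe_iff, EReal.coe_add, EReal.coe_add,
    hp.coe_toReal hθ]
  exact (hp z).trans (add_le_add_right ht _)

theorem isMinOn_epigraph (hp : IsProxPoint θ ε x p) (hθ : IsProperFunction θ) :
    IsMinOn (fun a : E × ℝ ↦ ‖x - a.1‖ ^ 2 / (2 * ε) + a.2) {a : E × ℝ | θ a.1 ≤ a.2}
      (p, (θ p).toReal) :=
  fun _ ht ↦ (hp.moreauEnvelope_eq hθ).symm.trans_le (hp.moreauEnvelope_le hθ ht)

end IsProxPoint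

end SeminormedAddCommGroup

section InnerProductSpace

variable {E : Type*} [NormedAddCommGroup E] [InnerProductSpace ℝ E]

namespace IsProxPoint

variable {θ : E → EReal} {ε : ℝ} {x y p q : E}

theorem inv_mul_inner_sub_le (hp : IsProxPoint θ ε x p) (hq : IsProxPoint θ ε y q)
    (hθ : IsProperFunction θ) (hconv : Convex ℝ {a : E × ℝ | θ a.1 ≤ a.2}) :
    ε⁻¹ * ⟪x - p, q - p⟫ ≤ (θ q).toReal - (θ p).toReal :=
  inv_mul_inner_sub_le_of_isMinOn hconv (b := (q, (θ q).toReal)) (hp.isMinOn_epigraph hθ)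
    (hp.coe_toReal hθ).ge (hq.coe_toReal hθ).ge

theorem moreauEnvelope_le_add_inner_add_sq (hp : IsProxPoint θ ε x p) (hq : IsProxPoint θ ε y q)
    (hθ : IsProperFunction θ) :
    moreauEnvelope θ ε y ≤
      moreauEnvelope θ ε x + ⟪ε⁻¹ • (x - p), y - x⟫ + (2 * ε)⁻¹ * ‖y - x‖ ^ 2 := by
  have hexpand : ‖y - p‖ ^ 2 = ‖x - p‖ ^ 2 + 2 * ⟪x - p, y - x⟫ + ‖y - x‖ ^ 2 := by
    rw [← norm_add_sq_real, sub_add_sub_cancel']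
  calc moreauEnvelope θ ε y
      ≤ ‖y - p‖ ^ 2 / (2 * ε) + (θ p).toReal := hq.moreauEnvelope_le hθ (hp.coe_toReal hθ).ge
    _ = _ := by
        rw [hp.moreauEnvelope_eq hθ, hexpand, real_inner_smul_left]
        ring

theorem moreauEnvelope_add_inner_le (hp : IsProxPoint θ ε x p) (hq : IsProxPoint θ ε y q)
    (hθ : IsProperFunction θ) (hconv : Convex ℝ {a : E × ℝ | θ a.1 ≤ a.2}) (hε : 0 < ε) :
    moreauEnvelope θ ε x + ⟪ε⁻¹ • (x - p), y - x⟫ ≤ moreauEnvelope θ ε y := by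
  have hfirst := hp.inv_mul_inner_sub_le hq hθ hconv
  have hsq : 0 ≤ (2 * ε)⁻¹ * ‖(y - q) - (x - p)‖ ^ 2 := by positivity
  have hinner : ⟪x - p, y - x⟫ = ⟪x - p, q - p⟫ + (⟪x - p, y - q⟫ - ‖x - p‖ ^ 2) := by
    rw [← real_inner_self_eq_norm_sq, ← inner_sub_right, ← inner_add_right]
    congr 1
    abel
  rw [norm_sub_sq_real, real_inner_comm] at hsq
  rw [hp.moreauEnvelope_eq hθ, hq.moreauEnvelope_eq hθ, real_inner_smul_left, hinner]
  linear_combination hfirst + hsq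

theorem sq_norm_residual_sub_le_inner (hp : IsProxPoint θ ε x p) (hq : IsProxPoint θ ε y q)
    (hθ : IsProperFunction θ) (hconv : Convex ℝ {a : E × ℝ | θ a.1 ≤ a.2}) (hε : 0 < ε) :
    ‖(x - p) - (y - q)‖ ^ 2 ≤ ⟪(x - p) - (y - q), x - y⟫ := by
  have hpq := hp.inv_mul_inner_sub_le hq hθ hconv
  have hqp := hq.inv_mul_inner_sub_le hp hθ hconv
  have hmono : ⟪(x - p) - (y - q), q - p⟫ ≤ 0 := by
    refine nonpos_of_mul_nonpos_right ?_ (inv_pos.2 hε)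
    rw [← neg_sub q p, inner_neg_right] at hqp
    rw [inner_sub_left]
    linarith
  have hsplit : q - p = (x - p) - (y - q) - (x - y) := by abel
  rw [hsplit, inner_sub_right, real_inner_self_eq_norm_sq] at hmono
  exact sub_nonpos.1 hmono

end IsProxPoint

theorem moreau_yosida_convex_differentiable_general {θ : E → EReal} (hθ : IsProperFunction θ)
    (hconv : Convex ℝ {a : E × ℝ | θ a.1 ≤ a.2}) {ε : ℝ} (hε : 0 < ε) {J : E → E}
    (hJ : ∀ x, IsProxPoint θ ε x (J x)) :
    ConvexOn ℝ univ (moreauEnvelope θ ε) ∧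
    (∀ x, HasFDerivAt (moreauEnvelope θ ε) (innerSL ℝ (ε⁻¹ • (x - J x))) x) ∧
    ∀ x y, ‖ε⁻¹ • (x - J x) - ε⁻¹ • (y - J y)‖ ≤ ε⁻¹ * ‖x - y‖ := by
  have hlower (x y : E) := (hJ x).moreauEnvelope_add_inner_le (hJ y) hθ hconv hε
  have hupper (x y : E) := (hJ x).moreauEnvelope_le_add_inner_add_sq (hJ y) hθ
  refine ⟨?_, fun x ↦ ?_, fun x y ↦ ?_⟩
  · exact convexOn_of_forall_exists_linearMap_add_le convex_univ fun x _ ↦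
      ⟨innerₛₗ ℝ (ε⁻¹ • (x - J x)), fun y _ ↦ hlower x y⟩
  · exact hasFDerivAt_of_le_of_le_add_sq (.of_forall (hlower x)) (.of_forall (hupper x))
  · rw [← smul_sub, norm_smul, Real.norm_of_nonneg (inv_nonneg.2 hε.le)]
    gcongr
    exact norm_le_norm_of_sq_norm_le_inner
      ((hJ x).sq_norm_residual_sub_le_inner (hJ y) hθ hconv hε)

end InnerProductSpace

/-- The Moreau–Yosida approximation `θ_ε : E → ℝ` is convex and everywhere differentiable,
with Fréchet derivative at `x` given by `v ↦ ⟨(x − J_ε(x))/ε, v⟩`; moreover the gradient map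
`x ↦ (x − J_ε(x))/ε` is Lipschitz with constant `1/ε`.  Here `J x` denotes the (unique)
minimizer of `y ↦ ‖x − y‖²/(2ε) + θ(y)` and
`θ_ε(x) = ⨅ y, (‖x − y‖²/(2ε) + θ(y))` (a real number). -/
theorem moreau_yosida_convex_differentiable {k : ℕ}
    (θ : EuclideanSpace ℝ (Fin k) → EReal)
    (hbot : ∀ x, θ x ≠ ⊥)
    (hproper : ∃ x, θ x ≠ ⊤)
    (hconv : Convex ℝ {p : EuclideanSpace ℝ (Fin k) × ℝ | θ p.1 ≤ (p.2 : EReal)})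
    (hlsc : LowerSemicontinuous θ)
    (ε : ℝ) (hε : 0 < ε)
    (J : EuclideanSpace ℝ (Fin k) → EuclideanSpace ℝ (Fin k))
    (hJ : ∀ x z, moreauFn θ ε x (J x) ≤ moreauFn θ ε x z)
    (θε : EuclideanSpace ℝ (Fin k) → ℝ)
    (hθε : ∀ x, θε x = (⨅ y, moreauFn θ ε x y).toReal) :
    ConvexOn ℝ Set.univ θε ∧
    (∀ x, HasFDerivAt θε
      ((InnerProductSpace.toDual ℝ (EuclideanSpace ℝ (Fin k))) (ε⁻¹ • (x - J x)) :
        EuclideanSpace ℝ (Fin k) →L[ℝ] ℝ) x) ∧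
    ∀ x y, ‖ε⁻¹ • (x - J x) - ε⁻¹ • (y - J y)‖ ≤ ε⁻¹ * ‖x - y‖ := by
  obtain rfl : θε = moreauEnvelope θ ε := funext hθε
  exact moreau_yosida_convex_differentiable_general ⟨hbot, hproper⟩ hconv hε hJ
end

section
/- There exists a constant α > 0 such that for every x ∈ ∂Θ and every x' in the closure of Θ, ‖x − x'‖² + α⟨x' − x, ∇φ(x)⟩ ≥ 0. -/
open scoped RealInnerProductSpace

/-!
A function `φ` with `K`-Lipschitz derivative differs from its tangent map at `x` by at most
`K / 2 * ‖y - x‖ ^ 2`. If moreover `φ x ≤ 0 ≤ φ y`, as happens for `x` in the frontier and `y` in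
the closure of `{φ > 0}`, then the linear term `fderiv ℝ φ x (y - x)` is at least
`-(K / 2) * ‖y - x‖ ^ 2`, so every `α > 0` with `α * K ≤ 2` works.
-/

open Set
open scoped NNReal

section NormedSpace

variable {E F : Type*} [NormedAddCommGroup E] [NormedSpace ℝ E]
  [NormedAddCommGroup F] [NormedSpace ℝ F] {s : Set E} {x y : E} {K : ℝ≥0}

lemma norm_sub_sub_le_of_hasFDerivWithinAt_of_lipschitzOnWith {f : E → F} {f' : E → E →L[ℝ] F}
    (hs : Convex ℝ s) (hf : ∀ z ∈ s, HasFDerivWithinAt f (f' z) s z)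
    (hf' : LipschitzOnWith K f' s) (hx : x ∈ s) (hy : y ∈ s) :
    ‖f y - f x - f' x (y - x)‖ ≤ K / 2 * ‖y - x‖ ^ 2 := by
  let γ : ℝ → E := AffineMap.lineMap x y
  let g : ℝ → F := fun t ↦ f (γ t) - f x - t • f' x (y - x)
  have hγ : MapsTo γ (Icc 0 1) s := hs.mapsTo_lineMap hx hy
  have hg (t : ℝ) (ht : t ∈ Icc (0 : ℝ) 1) :
      HasDerivWithinAt g ((f' (γ t) - f' x) (y - x)) (Icc 0 1) t := by
    have hfγ : HasDerivWithinAt (f ∘ γ) (f' (γ t) (y - x)) (Icc 0 1) t :=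
      (hf _ (hγ ht)).comp_hasDerivWithinAt t AffineMap.hasDerivWithinAt_lineMap hγ
    exact ((hfγ.sub_const (f x)).sub
      ((hasDerivWithinAt_id t (Icc 0 1)).smul_const (f' x (y - x)))).congr_deriv (by simp)
  have hB (t : ℝ) :
      HasDerivAt (fun t ↦ K / 2 * ‖y - x‖ ^ 2 * t ^ 2) (K * ‖y - x‖ ^ 2 * t) t :=
    ((hasDerivAt_pow 2 t).const_mul (K / 2 * ‖y - x‖ ^ 2)).congr_deriv (by ring)
  have hbound (t : ℝ) (ht : t ∈ Ico (0 : ℝ) 1) :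
      ‖(f' (γ t) - f' x) (y - x)‖ ≤ K * ‖y - x‖ ^ 2 * t :=
    calc ‖(f' (γ t) - f' x) (y - x)‖
        ≤ ‖f' (γ t) - f' x‖ * ‖y - x‖ := ContinuousLinearMap.le_opNorm _ _
      _ ≤ K * ‖γ t - x‖ * ‖y - x‖ := by
        gcongr
        exact hf'.norm_sub_le (hγ (Ico_subset_Icc_self ht)) hx
      _ = K * ‖y - x‖ ^ 2 * t := by
        rw [← vsub_eq_sub (γ t), AffineMap.lineMap_vsub_left, norm_smul, Real.norm_of_nonneg ht.1,
          vsub_eq_sub]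
        ring
  have hg_le := image_norm_le_of_norm_deriv_right_le_deriv_boundary
    (fun t ht ↦ (hg t ht).continuousWithinAt)
    (fun t ht ↦ (hg t (Ico_subset_Icc_self ht)).mono_of_mem_nhdsWithin (Icc_mem_nhdsGE_of_mem ht))
    (by simp [g, γ]) hB hbound (right_mem_Icc.2 zero_le_one)
  simpa [g, γ] using hg_le

lemma norm_sub_sq_add_mul_nonneg_of_hasFDerivWithinAt_of_lipschitzOnWith
    {f : E → ℝ} {f' : E → E →L[ℝ] ℝ} {α : ℝ}
    (hs : Convex ℝ s) (hf : ∀ z ∈ s, HasFDerivWithinAt f (f' z) s z)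
    (hf' : LipschitzOnWith K f' s) (hx : x ∈ s) (hy : y ∈ s) (hxy : f x ≤ f y)
    (hα : 0 ≤ α) (hαK : α * K ≤ 2) :
    0 ≤ ‖x - y‖ ^ 2 + α * f' x (y - x) := by
  have htaylor : f y - f x - f' x (y - x) ≤ K / 2 * ‖y - x‖ ^ 2 :=
    (Real.le_norm_self _).trans <|
      norm_sub_sub_le_of_hasFDerivWithinAt_of_lipschitzOnWith hs hf hf' hx hy
  have hlinear : -(K / 2 * ‖y - x‖ ^ 2) ≤ f' x (y - x) := by linarith
  rw [norm_sub_rev]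
  calc 0 ≤ (1 - α * K / 2) * ‖y - x‖ ^ 2 := mul_nonneg (by linarith) (sq_nonneg _)
    _ = ‖y - x‖ ^ 2 + α * -(K / 2 * ‖y - x‖ ^ 2) := by ring
    _ ≤ ‖y - x‖ ^ 2 + α * f' x (y - x) := by gcongr

lemma lipschitzWith_fderiv_of_norm_fderiv_fderiv_le {f : E → F} {C : ℝ} (hf : ContDiff ℝ 2 f)
    (hC : ∀ z, ‖fderiv ℝ (fderiv ℝ f) z‖ ≤ C) : LipschitzWith C.toNNReal (fderiv ℝ f) :=
  lipschitzWith_of_nnnorm_fderiv_le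
    ((hf.fderiv_right (m := 1) (by norm_num)).differentiable one_ne_zero)
    fun z ↦ NNReal.le_toNNReal_of_coe_le (hC z)

end NormedSpace

theorem boundary_inequality_general {E : Type*} [NormedAddCommGroup E] [InnerProductSpace ℝ E]
    [CompleteSpace E] {φ : E → ℝ} {s : Set E} {K : ℝ≥0} (hφ : Differentiable ℝ φ)
    (hs : Convex ℝ s) (hφ' : LipschitzOnWith K (fderiv ℝ φ) s) (hsub : closure {z | 0 < φ z} ⊆ s) :
    ∃ α : ℝ, 0 < α ∧ ∀ x ∈ frontier {z | 0 < φ z}, ∀ y ∈ closure {z | 0 < φ z},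
      0 ≤ ‖x - y‖ ^ 2 + α * ⟪y - x, gradient φ x⟫ := by
  have hα : 2 / (K + 1 : ℝ) * K ≤ 2 := by
    rw [div_mul_eq_mul_div, div_le_iff₀ (by positivity)]
    linarith
  refine ⟨2 / (K + 1), by positivity, fun x hx y hy ↦ ?_⟩
  have hφx : 0 = φ x := frontier_lt_subset_eq continuous_const hφ.continuous hx
  have hφy : 0 ≤ φ y := closure_lt_subset_le continuous_const hφ.continuous hy
  rw [real_inner_comm, inner_gradient_left]
  exact norm_sub_sq_add_mul_nonneg_of_hasFDerivWithinAt_of_lipschitzOnWith hs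
    (fun z _ ↦ (hφ z).hasFDerivAt.hasFDerivWithinAt) hφ' (hsub (frontier_subset_closure hx))
    (hsub hy) (hφx.symm.trans_le hφy) (by positivity) hα

/-- For a smooth bounded domain `Θ = {φ > 0}` with boundary `∂Θ = {φ = 0}` (where
`φ ∈ C²_b(ℝ^d)` and `∇φ` is the unit interior normal on the boundary), there is a constant
`α > 0` such that `‖x − x'‖² + α⟨x' − x, ∇φ(x)⟩ ≥ 0` for all `x ∈ ∂Θ` and `x'` in the
closure of `Θ`. -/
theorem boundary_inequality (d : ℕ) (hd : 1 ≤ d)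
    (Θ : Set (EuclideanSpace ℝ (Fin d)))
    (φ : EuclideanSpace ℝ (Fin d) → ℝ)
    (hφ : ContDiff ℝ 2 φ)
    (hφb : ∃ C : ℝ, ∀ x, ‖fderiv ℝ φ x‖ ≤ C ∧ ‖fderiv ℝ (fderiv ℝ φ) x‖ ≤ C)
    (hΘ : Θ = {x | 0 < φ x})
    (hΘconn : IsConnected Θ)
    (hΘbdd : Bornology.IsBounded Θ)
    (hbdry : frontier Θ = {x | φ x = 0})
    (hnormal : ∀ x ∈ frontier Θ, ‖gradient φ x‖ = 1) :
    ∃ α : ℝ, 0 < α ∧ ∀ x ∈ frontier Θ, ∀ x' ∈ closure Θ,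
      0 ≤ ‖x - x'‖ ^ 2 + α * ⟪x' - x, gradient φ x⟫ := by
  obtain ⟨C, hC⟩ := hφb
  have hlip := lipschitzWith_fderiv_of_norm_fderiv_fderiv_le hφ fun x ↦ (hC x).2
  exact hΘ ▸ boundary_inequality_general (hφ.differentiable two_ne_zero) convex_univ
    hlip.lipschitzOnWith (subset_univ _)
end
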